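/- A formula φ of minimal S1S is satisfiable under AS semantics if and only if it is satisfiable under UP semantics; that is, there exists an interpretation σ : ℕ → Set V with σ ⊨ φ if and only if there exist nonempty finite strings x, y over Set V with x·y^ω ⊨_UP φ. -/

import Mathlib

namespace Buechi

/-- Nonempty finite strings over `α`, given as a head together with a tail. -/
abbrev NStr (α : Type*) : Type _ := α × List α

/-- The list of symbols of a nonempty string. -/
def NStr.toList {α : Type*} (s : NStr α) : List α := s.1 :: s.2

/-- The ultimately periodic sequence `x·y^ω = x y y y ⋯`. -/
def upSeq {α : Type*} (x y : NStr α) (n : ℕ) : α :=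
  if h : n < x.toList.length then x.toList.get ⟨n, h⟩
  else y.toList.get ⟨(n - x.toList.length) % y.toList.length,
    Nat.mod_lt _ (by simp [NStr.toList])⟩

/-- Formulas of minimal S1S over the variable type `V`. -/
inductive MinForm (V : Type) : Type
  | less : V → V → MinForm V
  | incl : V → V → MinForm V
  | conj : MinForm V → MinForm V → MinForm V
  | neg : MinForm V → MinForm V
  | ex : V → MinForm V → MinForm V

/-- AS satisfaction `σ ⊨ φ`, where interpretations are arbitrary sequences
`σ : ℕ → Set V`. -/
def Sat {V : Type} (σ : ℕ → Set V) : MinForm V → Prop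
  | .less X Y => ∃ m n, m < n ∧ X ∈ σ m ∧ Y ∈ σ n
  | .incl X Y => ∀ n, X ∈ σ n → Y ∈ σ n
  | .conj φ ψ => Sat σ φ ∧ Sat σ ψ
  | .neg φ => ¬ Sat σ φ
  | .ex X φ => ∃ τ : ℕ → Set V, Sat τ φ ∧ ∀ Z, Z ≠ X → ∀ n, (Z ∈ σ n ↔ Z ∈ τ n)

/-- UP satisfaction `x·y^ω ⊨_UP φ`, where all interpretations, including the
existential witness in the clause for `∃X.φ`, range only over ultimately periodic
sequences given by pairs of nonempty strings over `Set V`. -/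
def SatUP {V : Type} : MinForm V → NStr (Set V) → NStr (Set V) → Prop
  | .less X Y, x, y => ∃ m n, m < n ∧ X ∈ upSeq x y m ∧ Y ∈ upSeq x y n
  | .incl X Y, x, y => ∀ n, X ∈ upSeq x y n → Y ∈ upSeq x y n
  | .conj φ ψ, x, y => SatUP φ x y ∧ SatUP ψ x y
  | .neg φ, x, y => ¬ SatUP φ x y
  | .ex X φ, x, y =>
      ∃ u v : NStr (Set V), SatUP φ u v ∧ ∀ Z, Z ≠ X → ∀ n, (Z ∈ upSeq x y n ↔ Z ∈ upSeq u v n)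

/-!
Colour finite words so that the membership of `s` in `{s | Sat s φ}` depends only on the colours of
the successive blocks of `s`, however `s` is cut into nonempty finite blocks. For `∃ X. φ` the colour
of a word is the set of `φ`-colours of its variants, and suitable variants of the blocks are glued
to a witness.

Given a witness `t` of `∃ X. φ` over a sequence of stem length `N` and period `p`, Ramsey's theorem
finds cuts of `t` at positions `≡ N [MOD p]` all of whose blocks after the first have one colour.
Repeating the second block forever preserves membership, and agreement with the periodic sequence as
well, because the length of that block is a multiple of `p`.
-/

theorem exists_strictMono_monochromatic {C : Type*} [Finite C] (χ : ℕ → ℕ → C) :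
    ∃ (g : ℕ → ℕ) (c : C), StrictMono g ∧ ∀ i j, i < j → χ (g i) (g j) = c := by
  let U := Filter.hyperfilter ℕ
  have limit_colour (k : ℕ → C) : ∃ c, ∀ᶠ j in U, k j = c := by
    obtain ⟨c, hc⟩ := (U.map k).eq_pure_of_finite
    have h : {c} ∈ U.map k := by rw [hc]; exact Set.mem_singleton c
    exact ⟨c, h⟩
  choose c hc using fun i => limit_colour (χ i)
  obtain ⟨d, hd⟩ := limit_colour c
  have eventually_gt (i : ℕ) : ∀ᶠ j in U, i < j :=
    Nat.hyperfilter_le_atTop (Filter.eventually_gt_atTop i)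
  obtain ⟨g, -, hg⟩ := exists_seq_of_forall_finset_exists (c · = d)
    (fun i j => i < j ∧ χ i j = d) fun F hF => by
      have hF' : ∀ᶠ j in U, ∀ i ∈ F, i < j ∧ χ i j = d :=
        (Filter.eventually_all_finset F).2 fun i hi =>
          (eventually_gt i).and (hF i hi ▸ hc i)
      exact (hd.and hF').exists
  exact ⟨g, d, fun i j hij => (hg i j hij).1, fun i j hij => (hg i j hij).2⟩

section Factor

variable {A B : Type*}

/-- The factor `s m, …, s (n - 1)` of the sequence `s`; it is empty if `n ≤ m`. -/
def factor (s : ℕ → A) (m n : ℕ) : List A := (List.Ico m n).map s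

@[simp]
theorem length_factor (s : ℕ → A) (m n : ℕ) : (factor s m n).length = n - m := by
  simp [factor]

@[simp]
theorem getElem_factor (s : ℕ → A) (m n k : ℕ) (hk : k < (factor s m n).length) :
    (factor s m n)[k] = s (m + k) := by
  simp [factor, List.Ico]

theorem forall_mem_factor {P : A → Prop} {s : ℕ → A} {m n : ℕ} :
    (∀ a ∈ factor s m n, P a) ↔ ∀ k ∈ Set.Ico m n, P (s k) := by
  simp only [factor, List.forall_mem_map, List.Ico.mem, Set.mem_Ico]

theorem exists_mem_factor {P : A → Prop} {s : ℕ → A} {m n : ℕ} :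
    (∃ a ∈ factor s m n, P a) ↔ ∃ k ∈ Set.Ico m n, P (s k) := by
  simp [factor]

theorem pairwise_factor {R : A → A → Prop} {s : ℕ → A} {m n : ℕ} :
    (factor s m n).Pairwise R ↔
      ∀ i ∈ Set.Ico m n, ∀ j ∈ Set.Ico m n, i < j → R (s i) (s j) := by
  simp only [List.pairwise_iff_getElem, length_factor, getElem_factor]
  constructor
  · rintro h i ⟨hmi, _⟩ j ⟨hmj, _⟩ hij
    simpa only [Nat.add_sub_cancel' hmi, Nat.add_sub_cancel' hmj] using
      h (i - m) (j - m) (by lia) (by lia) (by lia)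
  · intro h i j hi hj hij
    exact h _ ⟨by lia, by lia⟩ _ ⟨by lia, by lia⟩ (by lia)

theorem forall₂_factor {R : A → B → Prop} {s : ℕ → A} {t : ℕ → B} {m n : ℕ} :
    List.Forall₂ R (factor s m n) (factor t m n) ↔ ∀ k ∈ Set.Ico m n, R (s k) (t k) := by
  simp [factor, List.forall₂_same]

end Factor

section Cut

/-- `f` cuts `ℕ` into the nonempty finite blocks `[f i, f (i + 1))`. -/
structure IsCut (f : ℕ → ℕ) : Prop where
  strictMono : StrictMono f
  map_zero : f 0 = 0

theorem IsCut.existsUnique_mem_Ico {f : ℕ → ℕ} (hf : IsCut f) (n : ℕ) :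
    ∃! i, n ∈ Set.Ico (f i) (f (i + 1)) := by
  have hcover : ⋃ i, Set.Ico (f i) (f (i + 1)) = Set.Ici (f 0) :=
    iUnion_Ico_map_succ_eq_Ici (fun i => hf.strictMono.monotone bot_le)
      hf.strictMono.not_bddAbove_range_of_isSuccArchimedean
  obtain ⟨i, hi⟩ := Set.mem_iUnion.1 (hcover ▸ (by simp [hf.map_zero] : n ∈ Set.Ici (f 0)))
  refine ⟨i, hi, fun j hj => ?_⟩
  by_contra hji
  exact Set.disjoint_left.1 (hf.strictMono.monotone.pairwise_disjoint_on_Ico_succ hji) hj hi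

theorem IsCut.exists_factor_eq {A : Type*} {f : ℕ → ℕ} (hf : IsCut f) {w : ℕ → List A}
    (hw : ∀ i, (w i).length = f (i + 1) - f i) :
    ∃ s : ℕ → A, ∀ i, factor s (f i) (f (i + 1)) = w i := by
  choose b hb hb_unique using hf.existsUnique_mem_Ico
  have offset_lt (n : ℕ) : n - f (b n) < (w (b n)).length :=
    (hw _).symm ▸ Nat.sub_lt_sub_right (hb n).1 (hb n).2
  refine ⟨fun n => (w (b n))[n - f (b n)]'(offset_lt n), fun i => ?_⟩
  refine List.ext_getElem (by simp [hw]) fun k hk _ => ?_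
  rw [length_factor] at hk
  have hbi : b (f i + k) = i := (hb_unique _ i ⟨by lia, by lia⟩).symm
  simp [hbi]

/-- The cut of `ℕ` at the positions `0, g 0, g 1, …`. -/
def cutAt (g : ℕ → ℕ) : ℕ → ℕ
  | 0 => 0
  | i + 1 => g i

theorem isCut_cutAt {g : ℕ → ℕ} (hg : StrictMono g) (hpos : 0 < g 0) : IsCut (cutAt g) where
  strictMono := strictMono_nat_of_lt_succ fun
    | 0 => hpos
    | i + 1 => hg i.lt_succ_self
  map_zero := rfl

end Cut

section Lasso

variable {A : Type*}

/-- The position of `n` on a lasso with stem `[0, M)` and cycle `[M, M + q)`: the sequence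
`t ∘ lasso M q` is `x·y^ω` for the factors `x = t[0, M)` and `y = t[M, M + q)`. -/
def lasso (M q n : ℕ) : ℕ :=
  if n < M then n else M + (n - M) % q

theorem lasso_of_lt {M q n : ℕ} (h : n < M) : lasso M q n = n :=
  if_pos h

theorem lasso_add {M q n : ℕ} : lasso M q (M + n) = M + n % q := by
  simp [lasso]

theorem comp_lasso_eq {s : ℕ → A} {M q : ℕ} (hs : Function.Periodic (fun n => s (M + n)) q) :
    s ∘ lasso M q = s := by
  funext n
  rcases lt_or_ge n M with hn | hn
  · rw [Function.comp_apply, lasso_of_lt hn]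
  · obtain ⟨k, rfl⟩ := Nat.exists_eq_add_of_le hn
    rw [Function.comp_apply, lasso_add]
    exact hs.map_mod_nat k

theorem factor_comp_lasso_stem (t : ℕ → A) (M q : ℕ) :
    factor (t ∘ lasso M q) 0 M = factor t 0 M :=
  List.map_congr_left fun n hn => by
    rw [Function.comp_apply, lasso_of_lt (List.Ico.mem.1 hn).2]

theorem factor_comp_lasso_cycle (t : ℕ → A) (M q i : ℕ) :
    factor (t ∘ lasso M q) (M + i * q) (M + (i + 1) * q) = factor t M (M + q) := by
  have hlen : M + (i + 1) * q - (M + i * q) = q := by rw [Nat.succ_mul]; lia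
  refine List.ext_getElem (by simp [hlen]) fun k hk _ => ?_
  rw [length_factor, hlen] at hk
  simp [add_assoc, lasso_add, Nat.mod_eq_of_lt hk]

theorem periodic_upSeq (x y : NStr A) :
    Function.Periodic (fun n => upSeq x y (x.toList.length + n)) y.toList.length := by
  intro n
  simp [upSeq]

theorem NStr.exists_toList_eq_factor (t : ℕ → A) {m n : ℕ} (hmn : m < n) :
    ∃ x : NStr A, x.toList = factor t m n :=
  ⟨(t m, factor t (m + 1) n), by simp [NStr.toList, factor, List.Ico.eq_cons hmn]⟩

theorem exists_upSeq_eq_comp_lasso (t : ℕ → A) {M q : ℕ} (hM : 0 < M) (hq : 0 < q) :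
    ∃ x y : NStr A, upSeq x y = t ∘ lasso M q := by
  obtain ⟨x, hx⟩ := NStr.exists_toList_eq_factor t hM
  obtain ⟨y, hy⟩ := NStr.exists_toList_eq_factor t (Nat.lt_add_of_pos_right hq : M < M + q)
  refine ⟨x, y, funext fun n => ?_⟩
  rcases lt_or_ge n M with hn | hn
  · simp [upSeq, hx, hn, lasso_of_lt hn]
  · obtain ⟨k, rfl⟩ := Nat.exists_eq_add_of_le hn
    simp [upSeq, hx, hy, lasso_add]

end Lasso

section FinitelyRecognizable

variable {A B : Type*}

/-- The colouring `h` of finite words recognizes `L` if two sequences which can be cut into blocks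
of the same successive colours are both in `L` or both outside `L`. The two cuts are independent, so
corresponding blocks may have different lengths. -/
def Recognizes {C : Type*} (h : List A → C) (L : Set (ℕ → A)) : Prop :=
  ∀ ⦃s s' : ℕ → A⦄ ⦃f f' : ℕ → ℕ⦄, IsCut f → IsCut f' →
    (∀ i, h (factor s (f i) (f (i + 1))) = h (factor s' (f' i) (f' (i + 1)))) → s ∈ L → s' ∈ L

/-- A set of sequences recognized by a colouring of finite words with finitely many colours. Unlike
in the usual notion of recognition, the colouring need not be a semigroup morphism. -/
def FinitelyRecognizable (L : Set (ℕ → A)) : Prop :=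
  ∃ (C : Type) (_ : Finite C) (h : List A → C), Recognizes h L

theorem finitelyRecognizable_forall (P : A → Prop) :
    FinitelyRecognizable {s : ℕ → A | ∀ n, P (s n)} := by
  refine ⟨Prop, inferInstance, fun w => ∀ a ∈ w, P a, fun s s' f f' _ hf' hcol hs n => ?_⟩
  obtain ⟨i, hi, -⟩ := hf'.existsUnique_mem_Ico n
  have hblock := (hcol i).mp (forall_mem_factor.2 fun k _ => hs k)
  exact forall_mem_factor.1 hblock n hi

theorem finitelyRecognizable_exists_lt (P Q : A → Prop) :
    FinitelyRecognizable {s : ℕ → A | ∃ m n, m < n ∧ P (s m) ∧ Q (s n)} := by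
  refine ⟨Prop × Prop × Prop, inferInstance,
    fun w => (∃ a ∈ w, P a, ∃ a ∈ w, Q a, w.Pairwise fun a b => ¬(P a ∧ Q b)), ?_⟩
  rintro s s' f f' hf hf' hcol ⟨m, n, hmn, hm, hn⟩
  simp only [Prod.mk.injEq, eq_iff_iff, exists_mem_factor, pairwise_factor] at hcol
  obtain ⟨i, hi, -⟩ := hf.existsUnique_mem_Ico m
  obtain ⟨j, hj, -⟩ := hf.existsUnique_mem_Ico n
  have hij : i ≤ j := Nat.lt_succ_iff.1 <|
    hf.strictMono.lt_iff_lt.1 (hi.1.trans_lt (hmn.trans hj.2))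
  rcases hij.eq_or_lt with rfl | hij
  · have hpair := mt (hcol i).2.2.2 fun hno => hno m hi n hj hmn ⟨hm, hn⟩
    push Not at hpair
    obtain ⟨m', -, n', -, hmn', hm', hn'⟩ := hpair
    exact ⟨m', n', hmn', hm', hn'⟩
  · obtain ⟨m', hm'i, hm'⟩ := (hcol i).1.1 ⟨m, hi, hm⟩
    obtain ⟨n', hn'j, hn'⟩ := (hcol j).2.1.1 ⟨n, hj, hn⟩
    have hblocks : f' (i + 1) ≤ f' j := hf'.strictMono.monotone hij
    exact ⟨m', n', hm'i.2.trans_le (hblocks.trans hn'j.1), hm', hn'⟩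

theorem FinitelyRecognizable.inter {L L' : Set (ℕ → A)} (hL : FinitelyRecognizable L)
    (hL' : FinitelyRecognizable L') : FinitelyRecognizable (L ∩ L') := by
  obtain ⟨C, _, h, hh⟩ := hL
  obtain ⟨C', _, h', hh'⟩ := hL'
  refine ⟨C × C', inferInstance, fun w => (h w, h' w), fun s s' f f' hf hf' hcol hs => ?_⟩
  exact ⟨hh hf hf' (fun i => congrArg Prod.fst (hcol i)) hs.1,
    hh' hf hf' (fun i => congrArg Prod.snd (hcol i)) hs.2⟩

theorem FinitelyRecognizable.compl {L : Set (ℕ → A)} (hL : FinitelyRecognizable L) :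
    FinitelyRecognizable Lᶜ := by
  obtain ⟨C, hC, h, hh⟩ := hL
  exact ⟨C, hC, h, fun s s' f f' hf hf' hcol hs hs' =>
    hs (hh hf' hf (fun i => (hcol i).symm) hs')⟩

theorem FinitelyRecognizable.preimage_rel (R : A → B → Prop) {L : Set (ℕ → B)}
    (hL : FinitelyRecognizable L) :
    FinitelyRecognizable {s : ℕ → A | ∃ t ∈ L, ∀ n, R (s n) (t n)} := by
  obtain ⟨C, _, h, hh⟩ := hL
  refine ⟨Set C, inferInstance, fun w => {c | ∃ v, List.Forall₂ R w v ∧ h v = c}, ?_⟩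
  rintro s s' f f' hf hf' hcol ⟨t, ht, hst⟩
  have hblock (i : ℕ) : ∃ v, List.Forall₂ R (factor s' (f' i) (f' (i + 1))) v ∧
      h v = h (factor t (f i) (f (i + 1))) :=
    (Set.ext_iff.1 (hcol i) _).1 ⟨_, forall₂_factor.2 fun k _ => hst k, rfl⟩
  choose v hRv hv using hblock
  obtain ⟨t', ht'⟩ := hf'.exists_factor_eq fun i => by
    rw [← (hRv i).length_eq, length_factor]
  refine ⟨t', hh hf hf' (fun i => by rw [ht', hv]) ht, fun n => ?_⟩
  obtain ⟨i, hi, -⟩ := hf'.existsUnique_mem_Ico n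
  exact forall₂_factor.1 (ht' i ▸ hRv i) n hi

theorem FinitelyRecognizable.exists_comp_lasso_mem {L : Set (ℕ → A)}
    (hL : FinitelyRecognizable L) {t : ℕ → A} (ht : t ∈ L) {N p : ℕ} (hN : 0 < N) (hp : 0 < p) :
    ∃ k d, 0 < d ∧ t ∘ lasso (N + k * p) (d * p) ∈ L := by
  obtain ⟨C, _, h, hh⟩ := hL
  obtain ⟨g, c, hg, hc⟩ :=
    exists_strictMono_monochromatic fun i j => h (factor t (N + i * p) (N + j * p))
  obtain ⟨d, hd⟩ := Nat.exists_eq_add_of_lt (hg zero_lt_one)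
  let M := N + g 0 * p
  let q := (d + 1) * p
  have hq : 0 < q := Nat.mul_pos d.succ_pos hp
  have hMq : M + q = N + g 1 * p := by simp only [M, q, hd]; ring
  have hcut : StrictMono fun i => N + g i * p := fun i j hij =>
    Nat.add_lt_add_left (Nat.mul_lt_mul_of_pos_right (hg hij) hp) N
  have hcut' : StrictMono fun i => M + i * q := fun i j hij =>
    Nat.add_lt_add_left (Nat.mul_lt_mul_of_pos_right hij hq) M
  refine ⟨g 0, d + 1, d.succ_pos, hh (isCut_cutAt hcut (by lia)) (isCut_cutAt hcut' (by lia)) ?_ ht⟩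
  rintro (_ | i)
  · simp only [cutAt, zero_mul, add_zero]
    exact congrArg h (factor_comp_lasso_stem t M q).symm
  · calc h (factor t (N + g i * p) (N + g (i + 1) * p))
      _ = c := hc i (i + 1) i.lt_succ_self
      _ = h (factor t M (M + q)) := by rw [hMq]; exact (hc 0 1 zero_lt_one).symm
      _ = h (factor (t ∘ lasso M q) (M + i * q) (M + (i + 1) * q)) := by
        rw [factor_comp_lasso_cycle]

theorem FinitelyRecognizable.exists_upSeq_mem {L : Set (ℕ → B)} (hL : FinitelyRecognizable L)
    (R : A → B → Prop) {x y : NStr A} {t : ℕ → B} (ht : t ∈ L) (hR : ∀ n, R (upSeq x y n) (t n)) :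
    ∃ u v : NStr B, upSeq u v ∈ L ∧ ∀ n, R (upSeq x y n) (upSeq u v n) := by
  have hN : 0 < x.toList.length := Nat.succ_pos _
  have hp : 0 < y.toList.length := Nat.succ_pos _
  obtain ⟨k, d, hd, hmem⟩ := hL.exists_comp_lasso_mem ht hN hp
  obtain ⟨u, v, huv⟩ := exists_upSeq_eq_comp_lasso t
    (Nat.add_pos_left hN (k * y.toList.length)) (Nat.mul_pos hd hp)
  have hxy : upSeq x y ∘ lasso (x.toList.length + k * y.toList.length) (d * y.toList.length) =
      upSeq x y := comp_lasso_eq <| by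
    simpa only [add_assoc, Nat.cast_id] using
      ((periodic_upSeq x y).const_add (k * y.toList.length)).nat_mul d
  refine ⟨u, v, huv ▸ hmem, fun n => ?_⟩
  rw [huv, ← hxy]
  exact hR _

end FinitelyRecognizable

section Satisfaction

variable {V : Type}

theorem finitelyRecognizable_sat (φ : MinForm V) : FinitelyRecognizable {σ | Sat σ φ} := by
  induction φ with
  | less X Y => exact finitelyRecognizable_exists_lt (X ∈ ·) (Y ∈ ·)
  | incl X Y => exact finitelyRecognizable_forall fun a => X ∈ a → Y ∈ a
  | conj φ ψ ihφ ihψ => exact ihφ.inter ihψ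
  | neg φ ih => exact ih.compl
  | ex X φ ih =>
    convert ih.preimage_rel fun a b : Set V => ∀ Z, Z ≠ X → (Z ∈ a ↔ Z ∈ b) using 1
    ext σ
    exact exists_congr fun τ => and_congr_right fun _ =>
      ⟨fun h n Z hZ => h Z hZ n, fun h Z hZ n => h n Z hZ⟩

theorem sat_upSeq_iff (φ : MinForm V) (x y : NStr (Set V)) :
    Sat (upSeq x y) φ ↔ SatUP φ x y := by
  induction φ generalizing x y with
  | less X Y => rfl
  | incl X Y => rfl
  | conj φ ψ ihφ ihψ => exact and_congr (ihφ x y) (ihψ x y)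
  | neg φ ih => exact not_congr (ih x y)
  | ex X φ ih =>
    constructor
    · rintro ⟨τ, hτ, hagree⟩
      obtain ⟨u, v, huv, hagree'⟩ := (finitelyRecognizable_sat φ).exists_upSeq_mem
        (fun a b => ∀ Z, Z ≠ X → (Z ∈ a ↔ Z ∈ b)) hτ fun n Z hZ => hagree Z hZ n
      exact ⟨u, v, (ih u v).1 huv, fun Z hZ n => hagree' n Z hZ⟩
    · rintro ⟨u, v, huv, hagree⟩
      exact ⟨upSeq u v, (ih u v).2 huv, hagree⟩

theorem as_satisfiable_iff_up_satisfiable_general (φ : MinForm V) :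
    (∃ σ : ℕ → Set V, Sat σ φ) ↔ ∃ x y : NStr (Set V), SatUP φ x y := by
  simp only [← sat_upSeq_iff]
  constructor
  · rintro ⟨σ, hσ⟩
    obtain ⟨k, d, hd, hmem⟩ :=
      (finitelyRecognizable_sat φ).exists_comp_lasso_mem hσ zero_lt_one zero_lt_one
    obtain ⟨x, y, hxy⟩ := exists_upSeq_eq_comp_lasso σ (by lia : 0 < 1 + k * 1) (by lia : 0 < d * 1)
    exact ⟨x, y, hxy ▸ hmem⟩
  · rintro ⟨x, y, hxy⟩
    exact ⟨upSeq x y, hxy⟩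

end Satisfaction

/-- A formula of minimal S1S is satisfiable under AS semantics iff it is
satisfiable under UP semantics. -/
theorem as_satisfiable_iff_up_satisfiable {V : Type} [Fintype V] (φ : MinForm V) :
    (∃ σ : ℕ → Set V, Sat σ φ) ↔ ∃ x y : NStr (Set V), SatUP φ x y :=
  as_satisfiable_iff_up_satisfiable_general φ

end Buechi
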